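/- Let β < 0 and let C be a non-circular component of G. Then C is A(β)-harmonic (i.e. ρ(A(β)^C) = 1 and, in case C̄∖C ≠ ∅, ρ(A(β)^{C̄∖C}) < 1) if and only if the following three conditions hold: F(μ) < 0 for every loop μ in C̄; ρ(A(β)^C) = 1; and for every component C' of G contained in C̄∖C there exists β' > β with ρ(A(β')^{C'}) = 1. -/

import Mathlib

open Filter Finset

/-- The spectral radius of a real matrix, `ρ(M) = lim_n ‖Mⁿ‖^{1/n}`
(computed with the entrywise ℓ¹-norm, and as a `limsup` so that it is always defined;
it is `0` for the matrix over the empty index type). -/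
noncomputable def specRad {n : Type*} [Fintype n] [DecidableEq n] (M : Matrix n n ℝ) : ℝ :=
  Filter.limsup (fun k : ℕ => (∑ i, ∑ j, |(M ^ k) i j|) ^ ((1 : ℝ) / (k : ℝ))) Filter.atTop

/-- The spectral radius `ρ(B^S)` of the submatrix of `B` obtained by restricting to `S × S`. -/
noncomputable def specRadOn {V : Type*} [Fintype V] (B : Matrix V V ℝ) (S : Set V) : ℝ :=
  letI : Fintype S := (Set.toFinite S).fintype
  letI : DecidableEq S := Classical.decEq _
  specRad (fun i j : S => B i.1 j.1)

variable {V E : Type*}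

/-- Consecutive edges of the list match up: `r(eᵢ) = s(eᵢ₊₁)`. -/
def ChainOK (src rng : E → V) (μ : List E) : Prop :=
  List.Chain' (fun e f => rng e = src f) μ

/-- A loop: a nonempty path `μ = e₁⋯eₙ` with `s(e₁) = r(eₙ)`. -/
def IsLoop (src rng : E → V) (μ : List E) : Prop :=
  ∃ h : μ ≠ [], ChainOK src rng μ ∧ src (μ.head h) = rng (μ.getLast h)

/-- A loop lying in the vertex set `C`. -/
def LoopIn (src rng : E → V) (C : Set V) (μ : List E) : Prop :=
  IsLoop src rng μ ∧ ∀ e ∈ μ, src e ∈ C ∧ rng e ∈ C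

/-- `v ⤳ w`: there is a (possibly length-0) path from `v` to `w`. -/
def GReaches (src rng : E → V) (v w : V) : Prop :=
  v = w ∨ ∃ μ : List E, ∃ h : μ ≠ [],
    ChainOK src rng μ ∧ src (μ.head h) = v ∧ rng (μ.getLast h) = w

/-- The closure of a set of vertices: all vertices that reach it. -/
def GClosure (src rng : E → V) (C : Set V) : Set V :=
  {v | ∃ w ∈ C, GReaches src rng v w}

/-- A component: an equivalence class of `v ∼ w` (mutual reachability) containing a loop. -/
def GIsComponent (src rng : E → V) (C : Set V) : Prop :=
  (∃ v, C = {w | GReaches src rng v w ∧ GReaches src rng w v}) ∧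
  ∃ μ : List E, LoopIn src rng C μ

/-- The property that the loop `μ` witnesses circularity of the component `C`: `μ` is a simple
loop visiting every vertex of `C`, and containing every edge of the graph joining vertices
of `C`. -/
def CircularWitness (src rng : E → V) (C : Set V) (μ : List E) : Prop :=
  LoopIn src rng C μ ∧ (μ.map src).Nodup ∧
  (∀ v ∈ C, v ∈ μ.map src) ∧
  (∀ e : E, src e ∈ C → rng e ∈ C → e ∈ μ)

/-- A circular component: a component containing, up to the choice of starting vertex,
exactly one loop. -/
def IsCircular (src rng : E → V) (C : Set V) : Prop :=
  GIsComponent src rng C ∧ ∃ μ : List E, CircularWitness src rng C μ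

/-- The matrix `A(β)` with entries `A(β)_{vw} = Σ_{e : v → w} e^{-β F(e)}`. -/
noncomputable def Amat [Fintype E] [DecidableEq V] (src rng : E → V) (F : E → ℝ) (β : ℝ) :
    Matrix V V ℝ :=
  fun v w => ∑ e ∈ Finset.univ.filter (fun e => src e = v ∧ rng e = w), Real.exp (-β * F e)

/-- `F` extended to paths: `F(e₁⋯eₙ) = F(e₁) + ⋯ + F(eₙ)`. -/
def Fpath (F : E → ℝ) (μ : List E) : ℝ := (μ.map F).sum


lemma pw_bound {n : Type*} [Fintype n] [DecidableEq n] (M : Matrix n n ℝ) (hM : ∀ i j, 0 ≤ M i j)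
    (x : n → ℝ) (hx : ∀ i, 0 < x i) (q : ℝ) (hq : 0 < q)
    (h : ∀ i, (M.mulVec x) i ≤ q * x i) :
    ∃ K : ℝ, 0 < K ∧ ∀ k : ℕ, (∑ i, ∑ j, |(M ^ k) i j|) ≤ K * q ^ k := by
  have hnn : ∀ k : ℕ, ∀ i j, 0 ≤ (M ^ k) i j := by
    intro k
    induction k with
    | zero => intro i j; simp only [pow_zero, Matrix.one_apply]; split_ifs <;> norm_num
    | succ k ih =>
      intro i j
      rw [pow_succ, Matrix.mul_apply]
      exact Finset.sum_nonneg fun l _ => mul_nonneg (ih _ _) (hM _ _)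
  have hk : ∀ k : ℕ, ∀ i, ((M ^ k).mulVec x) i ≤ q ^ k * x i := by
    intro k
    induction k with
    | zero => intro i; simp
    | succ k ih =>
      intro i
      rw [pow_succ, ← Matrix.mulVec_mulVec]
      calc ((M ^ k).mulVec (M.mulVec x)) i = ∑ j, (M ^ k) i j * (M.mulVec x) j := rfl
        _ ≤ ∑ j, (M ^ k) i j * (q * x j) :=
            Finset.sum_le_sum fun j _ => mul_le_mul_of_nonneg_left (h j) (hnn k i j)
        _ = q * ((M ^ k).mulVec x) i := by
            simp only [Matrix.mulVec, dotProduct, Finset.mul_sum]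
            exact Finset.sum_congr rfl fun j _ => by ring
        _ ≤ q * (q ^ k * x i) := mul_le_mul_of_nonneg_left (ih i) hq.le
        _ = q ^ (k + 1) * x i := by ring
  refine ⟨(∑ i, ∑ j, x i / x j) + 1, ?_, ?_⟩
  · have : 0 ≤ ∑ i, ∑ j, x i / x j :=
      Finset.sum_nonneg fun i _ => Finset.sum_nonneg fun j _ => (div_pos (hx i) (hx j)).le
    linarith
  · intro k
    have h1 : ∀ i j, |(M ^ k) i j| ≤ x i / x j * q ^ k := by
      intro i j
      rw [abs_of_nonneg (hnn k i j), div_mul_eq_mul_div, le_div_iff₀ (hx j)]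
      calc (M ^ k) i j * x j ≤ ∑ l, (M ^ k) i l * x l :=
            Finset.single_le_sum (f := fun l => (M ^ k) i l * x l)
              (fun l _ => mul_nonneg (hnn k i l) (hx l).le) (Finset.mem_univ j)
        _ ≤ q ^ k * x i := hk k i
        _ = _ := by ring
    calc _ ≤ ∑ i, ∑ j, x i / x j * q ^ k :=
          Finset.sum_le_sum fun i _ => Finset.sum_le_sum fun j _ => h1 i j
      _ = (∑ i, ∑ j, x i / x j) * q ^ k := by simp only [Finset.sum_mul]
      _ ≤ _ := by
        have : 0 < q ^ k := by positivity
        nlinarith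

lemma root_bound {s : ℕ → ℝ} (hs : ∀ k, 0 ≤ s k) {K q : ℝ} (hK : 0 < K) (hq : 0 < q)
    (h : ∀ k, s k ≤ K * q ^ k) :
    ∀ᶠ k : ℕ in atTop, s k ^ ((1 : ℝ) / (k : ℝ)) ≤ K ^ ((1 : ℝ) / (k : ℝ)) * q := by
  filter_upwards [eventually_gt_atTop 0] with k hk
  have hk' : (k : ℝ) ≠ 0 := by exact_mod_cast hk.ne'
  calc s k ^ ((1 : ℝ) / (k : ℝ)) ≤ (K * q ^ k) ^ ((1 : ℝ) / (k : ℝ)) :=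
        Real.rpow_le_rpow (hs k) (h k) (by positivity)
    _ = _ := by
      rw [Real.mul_rpow hK.le (by positivity), ← Real.rpow_natCast q k, ← Real.rpow_mul hq.le,
        mul_one_div_cancel hk', Real.rpow_one]

lemma root_tendsto {K q : ℝ} (hK : 0 < K) :
    Tendsto (fun k : ℕ => K ^ ((1 : ℝ) / (k : ℝ)) * q) atTop (nhds q) := by
  have h1 : Tendsto (fun k : ℕ => (1 : ℝ) / (k : ℝ)) atTop (nhds 0) :=
    tendsto_one_div_atTop_nhds_zero_nat
  have h2 := (tendsto_const_nhds (x := K)).rpow h1 (Or.inl hK.ne')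
  simpa using h2.mul_const q

lemma sum_abs_nonneg' {n : Type*} [Fintype n] (M : Matrix n n ℝ) : 0 ≤ ∑ i, ∑ j, |M i j| :=
  Finset.sum_nonneg fun _ _ => Finset.sum_nonneg fun _ _ => abs_nonneg _

lemma specRad_bdd {n : Type*} [Fintype n] [DecidableEq n] (M : Matrix n n ℝ)
    (hM : ∀ i j, 0 ≤ M i j) :
    IsBoundedUnder (· ≤ ·) atTop
      (fun k : ℕ => (∑ i, ∑ j, |(M ^ k) i j|) ^ ((1 : ℝ) / (k : ℝ))) := by
  have hnn := sum_abs_nonneg' M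
  obtain ⟨K, hK, h⟩ := pw_bound M hM (fun _ => 1) (fun _ => one_pos)
    ((∑ i, ∑ j, |M i j|) + 1) (by linarith) (by
      intro i
      simp only [Matrix.mulVec, dotProduct, mul_one]
      calc ∑ j, M i j ≤ ∑ j, |M i j| := Finset.sum_le_sum fun j _ => le_abs_self _
        _ ≤ ∑ i, ∑ j, |M i j| := Finset.single_le_sum (f := fun i => ∑ j, |M i j|)
          (fun i _ => Finset.sum_nonneg fun j _ => abs_nonneg _) (Finset.mem_univ i)
        _ ≤ _ := by linarith)
  have h1 := root_bound (fun k => sum_abs_nonneg' (M ^ k)) hK (by linarith) h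
  exact (root_tendsto hK).isBoundedUnder_le.mono_le h1

lemma specRad_nonneg {n : Type*} [Fintype n] [DecidableEq n] (M : Matrix n n ℝ)
    (hM : ∀ i j, 0 ≤ M i j) : 0 ≤ specRad M := by
  refine le_limsup_of_frequently_le ?_ (specRad_bdd M hM)
  exact Frequently.of_forall fun k => Real.rpow_nonneg (sum_abs_nonneg' _) _

lemma specRad_le {n : Type*} [Fintype n] [DecidableEq n] (M : Matrix n n ℝ)
    (hM : ∀ i j, 0 ≤ M i j) (x : n → ℝ) (hx : ∀ i, 0 < x i) (q : ℝ) (hq : 0 < q)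
    (h : ∀ i, (M.mulVec x) i ≤ q * x i) : specRad M ≤ q := by
  obtain ⟨K, hK, h⟩ := pw_bound M hM x hx q hq h
  have h1 := root_bound (fun k => sum_abs_nonneg' (M ^ k)) hK hq h
  rw [← (root_tendsto (q := q) hK).limsup_eq]
  refine limsup_le_limsup h1 ?_ (root_tendsto hK).isBoundedUnder_le
  refine IsBoundedUnder.isCoboundedUnder_le ?_
  exact isBoundedUnder_of ⟨0, fun k => Real.rpow_nonneg (sum_abs_nonneg' _) _⟩

lemma specRad_lt_iff {n : Type*} [Fintype n] [DecidableEq n] (M : Matrix n n ℝ)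
    (hM : ∀ i j, 0 ≤ M i j) (r : ℝ) (hr : 0 < r) :
    specRad M < r ↔ ∃ x : n → ℝ, (∀ i, 0 < x i) ∧ ∀ i, (M.mulVec x) i < r * x i := by
  constructor
  · intro h
    have h1 := eventually_lt_of_limsup_lt h (specRad_bdd M hM)
    obtain ⟨N, hN, hN0⟩ := (h1.and (eventually_gt_atTop 0)).exists
    have hN' : (N : ℝ) ≠ 0 := by exact_mod_cast hN0.ne'
    have h2 : (∑ i, ∑ j, |(M ^ N) i j|) < r ^ N := by
      have := Real.rpow_lt_rpow (Real.rpow_nonneg (sum_abs_nonneg' _) _) hN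
        (show (0 : ℝ) < N by positivity)
      rwa [← Real.rpow_mul (sum_abs_nonneg' _), one_div_mul_cancel hN', Real.rpow_one,
        Real.rpow_natCast] at this
    have hnn : ∀ k : ℕ, ∀ i j, 0 ≤ (M ^ k) i j := by
      intro k
      induction k with
      | zero => intro i j; simp only [pow_zero, Matrix.one_apply]; split_ifs <;> norm_num
      | succ k ih =>
        intro i j
        rw [pow_succ, Matrix.mul_apply]
        exact Finset.sum_nonneg fun l _ => mul_nonneg (ih _ _) (hM _ _)
    have hsum : ∀ N : ℕ, ∀ i,
        (M.mulVec (∑ k ∈ range N, (r⁻¹) ^ (k + 1) • (M ^ k).mulVec 1)) i =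
        r * (∑ k ∈ range N, (r⁻¹) ^ (k + 1) • (M ^ k).mulVec (1 : n → ℝ)) i - 1
          + (r⁻¹) ^ N * ((M ^ N).mulVec 1) i := by
      intro N i
      induction N with
      | zero => simp
      | succ N ih =>
        rw [Finset.sum_range_succ, Matrix.mulVec_add, Pi.add_apply, ih, Matrix.mulVec_smul,
          Matrix.mulVec_mulVec, ← pow_succ']
        simp only [Pi.add_apply, Pi.smul_apply, smul_eq_mul]
        have hrr : r * (r⁻¹) ^ (N + 1) = (r⁻¹) ^ N := by
          rw [pow_succ]; field_simp
        linear_combination (-((M ^ N).mulVec 1) i) * hrr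
    refine ⟨∑ k ∈ range N, (r⁻¹) ^ (k + 1) • (M ^ k).mulVec 1, ?_, ?_⟩
    · intro i
      rw [Finset.sum_apply]
      refine lt_of_lt_of_le ?_ (Finset.single_le_sum
        (f := fun k => ((r⁻¹) ^ (k + 1) • (M ^ k).mulVec (1 : n → ℝ)) i) ?_
        (Finset.mem_range.2 hN0))
      · simp; exact hr
      · intro k _
        simp only [Pi.smul_apply, smul_eq_mul, Matrix.mulVec, dotProduct, Pi.one_apply, mul_one]
        exact mul_nonneg (by positivity) (Finset.sum_nonneg fun j _ => hnn k i j)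
    · intro i
      rw [hsum]
      have h3 : ((M ^ N).mulVec 1) i < r ^ N := by
        refine lt_of_le_of_lt ?_ h2
        simp only [Matrix.mulVec, dotProduct, Pi.one_apply, mul_one]
        calc ∑ j, (M ^ N) i j ≤ ∑ j, |(M ^ N) i j| :=
              Finset.sum_le_sum fun j _ => le_abs_self _
          _ ≤ _ := Finset.single_le_sum (f := fun i => ∑ j, |(M ^ N) i j|)
            (fun i _ => Finset.sum_nonneg fun j _ => abs_nonneg _) (Finset.mem_univ i)
      have h4 : (r⁻¹) ^ N * ((M ^ N).mulVec 1) i < 1 := by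
        rw [inv_pow, inv_mul_lt_iff₀ (by positivity)]; linarith
      linarith
  · rintro ⟨x, hx, h⟩
    have h1 : ∀ i, ∀ᶠ q in nhdsWithin r (Set.Iio r), (M.mulVec x) i ≤ q * x i := by
      intro i
      have : Tendsto (fun q => q * x i) (nhdsWithin r (Set.Iio r)) (nhds (r * x i)) :=
        (tendsto_id.mul_const _).mono_left nhdsWithin_le_nhds
      exact (this.eventually_const_lt (h i)).mono fun _ => le_of_lt
    have h2 : ∀ᶠ q in nhdsWithin r (Set.Iio r), 0 < q :=
      nhdsWithin_le_nhds (lt_mem_nhds hr)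
    obtain ⟨q, ⟨hq, hq0⟩, hqr⟩ :=
      (((eventually_all.2 h1).and h2).and self_mem_nhdsWithin).exists
    exact lt_of_le_of_lt (specRad_le M hM x hx q hq0 hq) hqr

/-- Sum over the edges leaving `v` and ending in `S`. -/
noncomputable def OSum [Fintype E] (src rng : E → V) (S : Set V) (v : V) (g : E → ℝ) : ℝ :=
  open Classical in ∑ e ∈ univ.filter (fun e => src e = v ∧ rng e ∈ S), g e

lemma OSum_le [Fintype E] {src rng : E → V} {S T : Set V} {v : V} {g h : E → ℝ}
    (hST : S ⊆ T) (hh : ∀ e, 0 ≤ h e)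
    (H : ∀ e, src e = v → rng e ∈ S → g e ≤ h e) :
    OSum src rng S v g ≤ OSum src rng T v h := by
  classical
  unfold OSum
  refine (Finset.sum_le_sum (g := h) fun e he => ?_).trans
    (Finset.sum_le_sum_of_subset_of_nonneg ?_ fun e _ _ => hh e)
  · simp at he; exact H e he.1 he.2
  · intro e he; simp at he ⊢; exact ⟨he.1, hST he.2⟩

lemma OSum_mul [Fintype E] (src rng : E → V) (S : Set V) (v : V) (c : ℝ) (g : E → ℝ) :
    c * OSum src rng S v g = OSum src rng S v (fun e => c * g e) := by
  classical
  unfold OSum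
  rw [Finset.mul_sum]

lemma OSum_single [Fintype E] {src rng : E → V} {S : Set V} {v : V} {g : E → ℝ}
    (hg : ∀ e, 0 ≤ g e) (e : E) (h1 : src e = v) (h2 : rng e ∈ S) :
    g e ≤ OSum src rng S v g := by
  classical
  unfold OSum
  exact Finset.single_le_sum (f := g) (fun e _ => hg e) (by simp [h1, h2])

lemma OSum_pair [Fintype E] {src rng : E → V} {S : Set V} {v : V} {g : E → ℝ}
    (hg : ∀ e, 0 ≤ g e) (e f : E) (hef : e ≠ f) (h1 : src e = v) (h2 : rng e ∈ S)
    (h3 : src f = v) (h4 : rng f ∈ S) :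
    g e + g f ≤ OSum src rng S v g := by
  classical
  unfold OSum
  rw [← Finset.sum_pair hef]
  refine Finset.sum_le_sum_of_subset_of_nonneg ?_ fun e _ _ => hg e
  intro a ha
  simp at ha ⊢
  rcases ha with rfl | rfl <;> simp [*]

lemma OSum_split [Fintype E] {src rng : E → V} {S T : Set V} {v : V} {g : E → ℝ} (hST : S ⊆ T) :
    OSum src rng T v g = OSum src rng S v g + OSum src rng (T \ S) v g := by
  classical
  unfold OSum
  rw [← Finset.sum_union]
  · refine Finset.sum_congr ?_ fun _ _ => rfl
    ext e
    have := @hST (rng e)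
    simp
    tauto
  · rw [Finset.disjoint_left]
    intro e
    simp
    tauto

lemma OSum_eq_zero [Fintype E] {src rng : E → V} {S : Set V} {v : V} {g : E → ℝ}
    (H : ∀ e, src e = v → rng e ∈ S → False) : OSum src rng S v g = 0 := by
  classical
  unfold OSum
  refine Finset.sum_eq_zero fun e he => ?_
  simp at he
  exact (H e he.1 he.2).elim

/-- Strict sub-invariance with constant `r`, in terms of edges. -/
def ESub [Fintype E] (src rng : E → V) (F : E → ℝ) (β : ℝ) (S : Set V) (r : ℝ) : Prop :=
  ∃ x : V → ℝ, (∀ v, 0 < x v) ∧ ∀ v ∈ S,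
    OSum src rng S v (fun e => Real.exp (-β * F e) * x (rng e)) < r * x v

lemma edge_sum [Fintype V] [DecidableEq V] [Fintype E] (src rng : E → V) (F : E → ℝ) (β : ℝ)
    (S : Set V) [Fintype S] (x : V → ℝ) (v : V) :
    ∑ w : S, Amat src rng F β v w.1 * x w.1 =
    OSum src rng S v (fun e => Real.exp (-β * F e) * x (rng e)) := by
  classical
  unfold OSum
  rw [← Finset.sum_subtype (univ.filter (fun w => w ∈ S)) (by simp)
    (fun w => Amat src rng F β v w * x w)]
  refine Eq.symm ((Finset.sum_fiberwise_of_maps_to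
    (t := univ.filter (fun w => w ∈ S)) (g := rng) (by simp) _).symm.trans (Eq.symm ?_))
  refine Finset.sum_congr rfl fun w hw => ?_
  rw [Amat, Finset.sum_mul, Finset.filter_filter]
  refine Finset.sum_congr ?_ ?_
  · ext e; simp at hw ⊢; grind
  · intro e he; simp at he; rw [he.2]

lemma Amat_nonneg [DecidableEq V] [Fintype E] (src rng : E → V) (F : E → ℝ) (β : ℝ) (v w : V) :
    0 ≤ Amat src rng F β v w :=
  Finset.sum_nonneg fun _ _ => (Real.exp_pos _).le

lemma specRadOn_nonneg [Fintype V] [DecidableEq V] [Fintype E] (src rng : E → V) (F : E → ℝ)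
    (β : ℝ) (S : Set V) : 0 ≤ specRadOn (Amat src rng F β) S := by
  let _ : Fintype S := (Set.toFinite S).fintype
  let _ : DecidableEq S := Classical.decEq _
  exact specRad_nonneg (fun i j : S => Amat src rng F β i.1 j.1)
    fun i j => Amat_nonneg _ _ _ _ _ _

lemma specRadOn_lt_iff [Fintype V] [DecidableEq V] [Fintype E] (src rng : E → V) (F : E → ℝ)
    (β : ℝ) (S : Set V) (r : ℝ) (hr : 0 < r) :
    specRadOn (Amat src rng F β) S < r ↔ ESub src rng F β S r := by
  classical
  let _ : Fintype S := (Set.toFinite S).fintype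
  let _ : DecidableEq S := Classical.decEq _
  refine (specRad_lt_iff (fun i j : S => Amat src rng F β i.1 j.1)
    (fun i j => Amat_nonneg _ _ _ _ _ _) r hr).trans ?_
  constructor
  · rintro ⟨x, hx, h⟩
    refine ⟨fun v => if hv : v ∈ S then x ⟨v, hv⟩ else 1, ?_, ?_⟩
    · intro v; dsimp only; split_ifs
      · exact hx _
      · exact one_pos
    · intro v hv
      rw [← edge_sum src rng F β S (fun v => if hv : v ∈ S then x ⟨v, hv⟩ else 1) v]
      have := h ⟨v, hv⟩
      simp only [Matrix.mulVec, dotProduct] at this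
      simp only [hv, dite_true]
      refine lt_of_le_of_lt (le_of_eq ?_) this
      refine Finset.sum_congr rfl fun w _ => ?_
      simp
  · rintro ⟨x, hx, h⟩
    refine ⟨fun v => x v.1, fun v => hx _, fun v => ?_⟩
    have := h v.1 v.2
    rw [← edge_sum] at this
    exact this

/-- `l` is a path from `a` to `b`. -/
def Wk (src rng : E → V) : V → List E → V → Prop
  | a, [], b => a = b
  | a, e :: l, b => src e = a ∧ Wk src rng (rng e) l b

/-- all edges of `l` lie in `S`. -/
def InS (src rng : E → V) (S : Set V) (l : List E) : Prop :=
  ∀ e ∈ l, src e ∈ S ∧ rng e ∈ S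

lemma wk_append {src rng : E → V} {a b : V} {l m : List E} :
    Wk src rng a (l ++ m) b ↔ ∃ c, Wk src rng a l c ∧ Wk src rng c m b := by
  induction l generalizing a with
  | nil => simp [Wk]
  | cons e l ih => simp [Wk, ih, and_assoc]

lemma chainOK_single (src rng : E → V) (e : E) : ChainOK src rng [e] :=
  List.isChain_singleton e

lemma chainOK_cons (src rng : E → V) (e f : E) (l : List E) :
    ChainOK src rng (e :: f :: l) ↔ rng e = src f ∧ ChainOK src rng (f :: l) :=
  List.isChain_cons_cons

lemma wk_iff {src rng : E → V} {a b : V} {l : List E} (h : l ≠ []) :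
    Wk src rng a l b ↔ ChainOK src rng l ∧ src (l.head h) = a ∧ rng (l.getLast h) = b := by
  induction l generalizing a with
  | nil => exact absurd rfl h
  | cons e l ih =>
    cases l with
    | nil => simp [Wk, chainOK_single]
    | cons f l =>
      have := ih (a := rng e) (by simp)
      simp only [Wk, chainOK_cons, List.head_cons] at this ⊢
      rw [this]
      simp only [List.getLast_cons_cons, @eq_comm _ (rng e)]
      tauto

lemma isLoop_iff {src rng : E → V} {l : List E} :
    IsLoop src rng l ↔ l ≠ [] ∧ ∃ v, Wk src rng v l v := by
  constructor
  · rintro ⟨h, h1, h2⟩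
    exact ⟨h, _, (wk_iff h).2 ⟨h1, rfl, h2.symm⟩⟩
  · rintro ⟨h, v, hv⟩
    have := (wk_iff h).1 hv
    exact ⟨h, this.1, this.2.1.trans this.2.2.symm⟩

lemma reach_iff {src rng : E → V} {a b : V} :
    GReaches src rng a b ↔ ∃ l, Wk src rng a l b := by
  constructor
  · rintro (rfl | ⟨l, h, h1⟩)
    · exact ⟨[], rfl⟩
    · exact ⟨l, (wk_iff h).2 h1⟩
  · rintro ⟨l, hl⟩
    by_cases h : l = []
    · subst h; exact Or.inl hl
    · exact Or.inr ⟨l, h, (wk_iff h).1 hl⟩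

lemma reach_refl {src rng : E → V} (a : V) : GReaches src rng a a := Or.inl rfl

lemma reach_trans {src rng : E → V} {a b c : V} (h : GReaches src rng a b)
    (h' : GReaches src rng b c) : GReaches src rng a c := by
  rw [reach_iff] at *
  obtain ⟨l, hl⟩ := h
  obtain ⟨m, hm⟩ := h'
  exact ⟨l ++ m, wk_append.2 ⟨b, hl, hm⟩⟩

lemma reach_edge {src rng : E → V} (e : E) : GReaches src rng (src e) (rng e) :=
  reach_iff.2 ⟨[e], rfl, rfl⟩

lemma wk_mem {src rng : E → V} {a b : V} {l : List E} (h : Wk src rng a l b) {e : E}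
    (he : e ∈ l) : GReaches src rng a (src e) ∧ GReaches src rng (rng e) b := by
  obtain ⟨s, t, rfl⟩ := List.append_of_mem he
  obtain ⟨c, h1, h2, h3⟩ := wk_append.1 h
  exact ⟨reach_iff.2 ⟨s, h2 ▸ h1⟩, reach_iff.2 ⟨t, h3⟩⟩

/-- The class of `v`. -/
def cls (src rng : E → V) (v : V) : Set V := {w | GReaches src rng v w ∧ GReaches src rng w v}

lemma mem_cls_self {src rng : E → V} (v : V) : v ∈ cls src rng v := ⟨reach_refl v, reach_refl v⟩

lemma cls_eq {src rng : E → V} {v w : V} (h : w ∈ cls src rng v) :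
    cls src rng w = cls src rng v := by
  ext u
  exact ⟨fun hu => ⟨reach_trans h.1 hu.1, reach_trans hu.2 h.2⟩,
    fun hu => ⟨reach_trans h.2 hu.1, reach_trans hu.2 h.1⟩⟩

lemma wk_inS_cls {src rng : E → V} {v a b : V} {l : List E} (h : Wk src rng a l b)
    (ha : a ∈ cls src rng v) (hb : b ∈ cls src rng v) : InS src rng (cls src rng v) l := by
  intro e he
  obtain ⟨h1, h2⟩ := wk_mem h he
  have h3 := reach_edge (src := src) (rng := rng) e
  exact ⟨⟨reach_trans ha.1 h1, reach_trans h3 (reach_trans h2 hb.2)⟩,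
    ⟨reach_trans ha.1 (reach_trans h1 h3), reach_trans h2 hb.2⟩⟩

lemma cut {src rng : E → V} {a b : V} {l : List E} (h : Wk src rng a l b)
    (hn : ¬ (l.map src).Nodup) :
    ∃ p q s, l = p ++ (q ++ s) ∧ q ≠ [] ∧ s ≠ [] ∧ (∃ c, Wk src rng c q c) ∧
      Wk src rng a (p ++ s) b := by
  induction l generalizing a with
  | nil => simp at hn
  | cons e l ih =>
    obtain ⟨h1, h2⟩ := h
    by_cases hm : src e ∈ l.map src
    · obtain ⟨f, hf, hfe⟩ := List.mem_map.1 hm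
      obtain ⟨q, s, rfl⟩ := List.append_of_mem hf
      obtain ⟨c, h3, h4, h5⟩ := wk_append.1 h2
      refine ⟨[], e :: q, f :: s, by simp, by simp, by simp, ⟨src e, rfl, ?_⟩, ?_⟩
      · rw [← hfe, h4]; exact h3
      · exact ⟨hfe.trans h1, h5⟩
    · have hn' : ¬ (l.map src).Nodup := by
        intro h; exact hn (by simpa using ⟨by simpa using hm, h⟩)
      obtain ⟨p, q, s, rfl, hq, hs, hc, hw⟩ := ih h2 hn'
      exact ⟨e :: p, q, s, by simp, hq, hs, hc, h1, hw⟩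

lemma Fpath_append (F : E → ℝ) (l m : List E) : Fpath F (l ++ m) = Fpath F l + Fpath F m := by
  simp [Fpath]

lemma fin_len [Fintype E] (N : ℕ) : {l : List E | l.length ≤ N}.Finite :=
  List.finite_length_le E N

lemma walk_bound [Fintype V] [Fintype E] (src rng : E → V) (F : E → ℝ) (S : Set V)
    (hS : ∀ l, LoopIn src rng S l → Fpath F l < 0) :
    ∃ c K : ℝ, 0 < c ∧ ∀ (l : List E) (a b : V), Wk src rng a l b → InS src rng S l →
      Fpath F l ≤ K - c * l.length := by
  set N := Fintype.card V
  have h1 : ∃ c : ℝ, 0 < c ∧ ∀ l : List E, l.length ≤ N → LoopIn src rng S l →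
      Fpath F l ≤ -c := by
    have hf : {l : List E | l.length ≤ N ∧ LoopIn src rng S l}.Finite :=
      (fin_len N).subset fun l hl => hl.1
    rcases Set.eq_empty_or_nonempty {l : List E | l.length ≤ N ∧ LoopIn src rng S l} with h | h
    · refine ⟨1, one_pos, fun l hl hl' => ?_⟩
      have : l ∈ {l : List E | l.length ≤ N ∧ LoopIn src rng S l} := ⟨hl, hl'⟩
      rw [h] at this; exact this.elim
    · obtain ⟨m, hm, hmax⟩ := Set.exists_max_image _ (Fpath F) hf h
      exact ⟨-Fpath F m, by linarith [hS m hm.2], fun l hl hl' => by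
        have := hmax l ⟨hl, hl'⟩; linarith⟩
  obtain ⟨c', hc', hloop⟩ := h1
  set c := c' / (N + 1) with hcdef
  have hc : 0 < c := by positivity
  obtain ⟨K, hK⟩ := ((fin_len (E := E) N).image (fun l => Fpath F l + c * l.length)).bddAbove
  refine ⟨c, K, hc, ?_⟩
  intro l
  induction hn : l.length using Nat.strong_induction_on generalizing l with
  | _ n ih =>
    intro a b hw hin
    by_cases hlen : l.length ≤ N
    · have := hK ⟨l, hlen, rfl⟩
      simp only at this
      rw [← hn]; linarith
    · push Not at hlen
      obtain ⟨d, hw1, hw2⟩ : ∃ d, Wk src rng a (l.take (N + 1)) d ∧ Wk src rng d (l.drop (N + 1)) b :=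
        wk_append.1 (by rwa [List.take_append_drop])
      have hnd : ¬ ((l.take (N + 1)).map src).Nodup := by
        intro h
        have := h.length_le_card
        simp at this
        omega
      obtain ⟨p, q, s, hl, hq, hs, hc1, hw3⟩ := cut hw1 hnd
      have hl' : l = p ++ (q ++ s) ++ l.drop (N + 1) := by
        rw [← hl, List.take_append_drop]
      have hqN : q.length ≤ N := by
        have h := congrArg List.length hl
        have hs' := List.length_pos_iff.2 hs
        simp at h
        omega
      have hq0 := List.length_pos_iff.2 hq
      set t := l.drop (N + 1)
      have hinq : InS src rng S q := fun e he => hin e (by rw [hl']; simp [he])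
      have hinr : InS src rng S (p ++ s ++ t) := fun e he => hin e (by
        rw [hl']; simp at he ⊢; tauto)
      have hFq := hloop q hqN ⟨isLoop_iff.2 ⟨hq, hc1⟩, hinq⟩
      have hlen2 : l.length = (p ++ s ++ t).length + q.length := by
        conv_lhs => rw [hl']
        simp; omega
      have hrec := ih _ (by omega) (p ++ s ++ t) rfl a b (wk_append.2 ⟨d, hw3, hw2⟩) hinr
      have hF : Fpath F l = Fpath F (p ++ s ++ t) + Fpath F q := by
        conv_lhs => rw [hl']
        simp only [Fpath_append]; ring
      have hcq : c * q.length ≤ c' := by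
        have h1 : (q.length : ℝ) ≤ N + 1 := by exact_mod_cast hqN.trans (Nat.le_succ _)
        calc c * q.length ≤ c * (N + 1) := by gcongr
          _ = c' := by rw [hcdef]; field_simp
      rw [← hn, hF, hlen2]
      push_cast
      nlinarith

lemma potential [Fintype V] [Fintype E] (src rng : E → V) (F : E → ℝ) (S : Set V)
    (hS : ∀ l, LoopIn src rng S l → Fpath F l < 0) :
    ∃ c : ℝ, 0 < c ∧ ∃ φ : V → ℝ, ∀ e, src e ∈ S → rng e ∈ S →
      F e + c + φ (rng e) ≤ φ (src e) := by
  obtain ⟨c, K, hc, h⟩ := walk_bound src rng F S hS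
  let T : V → Set ℝ := fun a => {y | ∃ l b, Wk src rng a l b ∧ InS src rng S l ∧
    y = Fpath F l + c * l.length}
  have hb : ∀ a, BddAbove (T a) := by
    intro a
    refine ⟨K, ?_⟩
    rintro y ⟨l, b, h1, h2, rfl⟩
    linarith [h l a b h1 h2]
  have hne : ∀ a, (T a).Nonempty := fun a => ⟨_, [], a, rfl, by simp [InS], rfl⟩
  refine ⟨c, hc, fun a => sSup (T a), ?_⟩
  intro e h1 h2
  have : sSup (T (rng e)) ≤ sSup (T (src e)) - (F e + c) := by
    refine csSup_le (hne _) ?_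
    rintro y ⟨l, b, h3, h4, rfl⟩
    have := le_csSup (hb (src e)) (a := Fpath F (e :: l) + c * (e :: l).length)
      ⟨e :: l, b, ⟨rfl, h3⟩, by
        intro f hf
        rcases List.mem_cons.1 hf with rfl | hf
        · exact ⟨h1, h2⟩
        · exact h4 f hf, rfl⟩
    have h5 : Fpath F (e :: l) = F e + Fpath F l := by simp [Fpath]
    rw [h5] at this
    push_cast [List.length_cons] at this
    linarith
  linarith

lemma ESub_transfer [Fintype V] [Fintype E] (src rng : E → V) (F : E → ℝ) (S : Set V)
    (hS : ∀ l, LoopIn src rng S l → Fpath F l < 0) :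
    ∃ c : ℝ, 0 < c ∧ ∀ β β' r : ℝ, β < β' → ESub src rng F β' S r →
      ESub src rng F β S (Real.exp (-((β' - β) * c)) * r) := by
  obtain ⟨c, hc, φ, hφ⟩ := potential src rng F S hS
  refine ⟨c, hc, ?_⟩
  rintro β β' r hb ⟨x, hx, h⟩
  refine ⟨fun v => Real.exp ((β' - β) * φ v) * x v, fun v => mul_pos (Real.exp_pos _) (hx v), ?_⟩
  intro v hv
  have h1 := mul_lt_mul_of_pos_left (h v hv) (Real.exp_pos ((β' - β) * (φ v - c)))
  rw [OSum_mul] at h1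
  refine lt_of_le_of_lt (OSum_le subset_rfl (fun e => ?_) (fun e he1 he2 => ?_)) (h1.trans_eq ?_)
  · exact mul_nonneg (Real.exp_pos _).le (mul_nonneg (Real.exp_pos _).le (hx _).le)
  · rw [← mul_assoc, ← mul_assoc, ← Real.exp_add, ← Real.exp_add]
    refine mul_le_mul_of_nonneg_right (Real.exp_le_exp.2 ?_) (hx _).le
    have := hφ e (he1 ▸ hv) he2
    rw [he1] at this
    nlinarith
  · rw [mul_sub, sub_eq_add_neg, Real.exp_add]; ring

lemma ESub_mono [Fintype E] {src rng : E → V} {F : E → ℝ} {S T : Set V} {β r : ℝ}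
    (hST : S ⊆ T) (h : ESub src rng F β T r) : ESub src rng F β S r := by
  obtain ⟨x, hx, h⟩ := h
  refine ⟨x, hx, fun v hv => lt_of_le_of_lt ?_ (h v (hST hv))⟩
  exact OSum_le hST (fun e => mul_nonneg (Real.exp_pos _).le (hx _).le) fun _ _ _ => le_rfl

lemma walk_weight [Fintype E] {src rng : E → V} {F : E → ℝ} {S : Set V} {β r : ℝ} (hr : 0 < r)
    {x : V → ℝ} (hx : ∀ v, 0 < x v)
    (h : ∀ v ∈ S, OSum src rng S v (fun e => Real.exp (-β * F e) * x (rng e)) < r * x v)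
    {a b : V} {l : List E} (hw : Wk src rng a l b) (hin : InS src rng S l) :
    Real.exp (-β * Fpath F l) * x b ≤ r ^ l.length * x a ∧
    (l ≠ [] → Real.exp (-β * Fpath F l) * x b < r ^ l.length * x a) := by
  induction l generalizing a with
  | nil => cases hw; simp [Fpath]
  | cons e l ih =>
    obtain ⟨h1, h2⟩ := hw
    have hin' := hin e (by simp)
    obtain ⟨ih, -⟩ := ih h2 fun f hf => hin f (by simp [hf])
    have h3 := h a (h1 ▸ hin'.1)
    have h4 := OSum_single (g := fun e => Real.exp (-β * F e) * x (rng e))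
      (fun e => mul_nonneg (Real.exp_pos _).le (hx _).le) e h1 hin'.2
    have h5 : Real.exp (-β * F e) * x (rng e) < r * x a := lt_of_le_of_lt h4 h3
    have h6 : Fpath F (e :: l) = F e + Fpath F l := by simp [Fpath]
    have : Real.exp (-β * Fpath F (e :: l)) * x b < r ^ (e :: l).length * x a := by
      rw [h6, mul_add, Real.exp_add, List.length_cons, pow_succ]
      calc _ = Real.exp (-β * F e) * (Real.exp (-β * Fpath F l) * x b) := by ring
        _ ≤ Real.exp (-β * F e) * (r ^ l.length * x (rng e)) := by gcongr
        _ = r ^ l.length * (Real.exp (-β * F e) * x (rng e)) := by ring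
        _ < r ^ l.length * (r * x a) := by gcongr
        _ = _ := by ring
    exact ⟨this.le, fun _ => this⟩

lemma loop_weight [Fintype E] {src rng : E → V} {F : E → ℝ} {S : Set V} {β r : ℝ} (hr : 0 < r)
    (h : ESub src rng F β S r) {l : List E} (hl : LoopIn src rng S l) :
    Real.exp (-β * Fpath F l) < r ^ l.length := by
  obtain ⟨x, hx, h⟩ := h
  obtain ⟨h1, h2⟩ := hl
  obtain ⟨hne, v, hv⟩ := isLoop_iff.1 h1
  exact lt_of_mul_lt_mul_right ((walk_weight hr hx h hv h2).2 hne) (hx v).le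

lemma ESub_shift [Fintype E] (src rng : E → V) (F : E → ℝ) (S : Set V) :
    ∃ M : ℝ, 0 ≤ M ∧ ∀ β β' r : ℝ, ESub src rng F β' S r →
      ESub src rng F β S (Real.exp (M * |β - β'|) * r) := by
  refine ⟨∑ e, |F e|, Finset.sum_nonneg fun e _ => abs_nonneg _, ?_⟩
  rintro β β' r ⟨x, hx, h⟩
  refine ⟨x, hx, fun v hv => ?_⟩
  have h1 := mul_lt_mul_of_pos_left (h v hv) (Real.exp_pos ((∑ e, |F e|) * |β - β'|))
  rw [OSum_mul] at h1
  refine lt_of_le_of_lt (OSum_le subset_rfl (fun e => ?_) (fun e he1 he2 => ?_)) (h1.trans_eq ?_)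
  · exact mul_nonneg (Real.exp_pos _).le (mul_nonneg (Real.exp_pos _).le (hx _).le)
  · rw [← mul_assoc, ← Real.exp_add]
    refine mul_le_mul_of_nonneg_right (Real.exp_le_exp.2 ?_) (hx _).le
    have h2 : |F e| ≤ ∑ e, |F e| :=
      Finset.single_le_sum (f := fun e => |F e|) (fun e _ => abs_nonneg _) (Finset.mem_univ e)
    have h3 : -(β - β') * F e ≤ |F e| * |β - β'| := by
      rw [← abs_mul, mul_comm (F e)]
      rw [neg_mul]; exact neg_le_abs _
    have h4 : |F e| * |β - β'| ≤ (∑ e, |F e|) * |β - β'| := by gcongr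
    linarith
  · ring

lemma rho_continuous [Fintype V] [DecidableEq V] [Fintype E] (src rng : E → V) (F : E → ℝ)
    (S : Set V) : Continuous (fun β => specRadOn (Amat src rng F β) S) := by
  obtain ⟨M, hM, h⟩ := ESub_shift src rng F S
  have key : ∀ β β', specRadOn (Amat src rng F β) S ≤
      Real.exp (M * |β - β'|) * specRadOn (Amat src rng F β') S := by
    intro β β'
    have hp := Real.exp_pos (M * |β - β'|)
    rw [← div_le_iff₀' hp]
    refine le_of_forall_gt_imp_ge_of_dense fun r hr => ?_
    have hr0 : 0 < r := lt_of_le_of_lt (specRadOn_nonneg src rng F β' S) hr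
    have h1 := h β β' r ((specRadOn_lt_iff src rng F β' S r hr0).1 hr)
    have h2 := (specRadOn_lt_iff src rng F β S _ (by positivity)).2 h1
    rw [div_le_iff₀' hp]
    exact h2.le
  rw [continuous_iff_continuousAt]
  intro b
  have hlim : ∀ s : ℝ, Tendsto (fun β => Real.exp (s * (M * |β - b|)) *
      specRadOn (Amat src rng F b) S) (nhds b) (nhds (specRadOn (Amat src rng F b) S)) := by
    intro s
    have : Continuous (fun β => Real.exp (s * (M * |β - b|)) *
      specRadOn (Amat src rng F b) S) := by fun_prop
    have h2 := this.tendsto b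
    simpa using h2
  refine tendsto_of_tendsto_of_tendsto_of_le_of_le (hlim (-1)) (hlim 1) ?_ ?_
  · intro β
    have := key b β
    simp only
    rw [neg_one_mul, Real.exp_neg, inv_mul_le_iff₀ (Real.exp_pos _), abs_sub_comm]
    exact this
  · intro β
    simpa using key β b

lemma glue [Fintype V] [Fintype E] (src rng : E → V) (F : E → ℝ) (β : ℝ) (D : Set V)
    (hD : ∀ v ∈ D, cls src rng v ⊆ D) (hS : ∀ v ∈ D, ESub src rng F β (cls src rng v) 1) :
    ESub src rng F β D 1 := by
  have h0 : ∀ S : Set V, ∃ x : V → ℝ, (∀ v, 0 < x v) ∧ (ESub src rng F β S 1 → ∀ v ∈ S,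
      OSum src rng S v (fun e => Real.exp (-β * F e) * x (rng e)) < 1 * x v) := by
    intro S
    by_cases h : ESub src rng F β S 1
    · obtain ⟨x, hx, h'⟩ := h
      exact ⟨x, hx, fun _ => h'⟩
    · exact ⟨fun _ => 1, fun _ => one_pos, fun h' => absurd h' h⟩
  choose X hX hX' using h0
  let y : V → ℝ := fun v => X (cls src rng v) v
  have hy : ∀ v, 0 < y v := fun v => hX _ _
  let R : V → ℝ := fun v => OSum src rng (D \ cls src rng v) v
    (fun e => Real.exp (-β * F e) * y (rng e))
  let Q : V → ℝ := fun v => OSum src rng (cls src rng v) v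
    (fun e => Real.exp (-β * F e) * y (rng e))
  have hQ : ∀ v ∈ D, Q v < y v := by
    intro v hv
    have := hX' _ (hS v hv) v (mem_cls_self v)
    rw [one_mul] at this
    refine lt_of_le_of_lt ?_ this
    refine OSum_le subset_rfl (fun e => mul_nonneg (Real.exp_pos _).le (hX _ _).le) ?_
    intro e he1 he2
    simp only [y]
    rw [cls_eq he2]
  have hev : ∀ v, ∀ᶠ ε : ℝ in nhdsWithin 0 (Set.Ioi 0), v ∈ D → Q v + ε * R v < y v := by
    intro v
    by_cases hv : v ∈ D
    · have ht : Tendsto (fun ε : ℝ => Q v + ε * R v) (nhdsWithin 0 (Set.Ioi 0)) (nhds (Q v)) := by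
        have hc : Continuous (fun ε : ℝ => Q v + ε * R v) := by fun_prop
        have := hc.tendsto 0
        simp only [zero_mul, add_zero] at this
        exact this.mono_left nhdsWithin_le_nhds
      exact (ht.eventually_lt_const (hQ v hv)).mono fun _ h _ => h
    · exact Eventually.of_forall fun _ h => absurd h hv
  have hle : ∀ᶠ ε : ℝ in nhdsWithin 0 (Set.Ioi 0), ε ≤ 1 :=
    nhdsWithin_le_nhds (ge_mem_nhds one_pos)
  obtain ⟨ε, ⟨hε, hε1⟩, hε0⟩ := (((eventually_all.2 hev).and hle).and self_mem_nhdsWithin).exists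
  have hε0 : 0 < ε := hε0
  have hK1 : 1 ≤ ε⁻¹ := (one_le_inv₀ hε0).2 hε1
  let ht : V → ℕ := fun v => {w | GReaches src rng v w}.ncard
  refine ⟨fun v => (ε⁻¹) ^ ht v * y v, fun v => mul_pos (by positivity) (hy v), ?_⟩
  intro v hv
  have hp : 0 < (ε⁻¹) ^ ht v := by positivity
  have e1 : OSum src rng (cls src rng v) v
      (fun e => Real.exp (-β * F e) * ((ε⁻¹) ^ ht (rng e) * y (rng e))) ≤ (ε⁻¹) ^ ht v * Q v := by
    rw [OSum_mul]
    refine OSum_le subset_rfl (fun e => ?_) ?_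
    · exact mul_nonneg hp.le (mul_nonneg (Real.exp_pos _).le (hy _).le)
    · intro e he1 he2
      have : ht (rng e) = ht v := by
        simp only [ht]
        congr 1
        ext w
        exact ⟨fun h => reach_trans he2.1 h, fun h => reach_trans he2.2 h⟩
      rw [this]
      exact le_of_eq (by ring)
  have e2 : OSum src rng (D \ cls src rng v) v
      (fun e => Real.exp (-β * F e) * ((ε⁻¹) ^ ht (rng e) * y (rng e)))
        ≤ (ε⁻¹) ^ ht v * ε * R v := by
    rw [OSum_mul]
    refine OSum_le subset_rfl (fun e => ?_) ?_
    · exact mul_nonneg (by positivity) (mul_nonneg (Real.exp_pos _).le (hy _).le)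
    · intro e he1 he2
      have hre : GReaches src rng v (rng e) := he1 ▸ reach_edge e
      have hlt : ht (rng e) < ht v := by
        refine Set.ncard_lt_ncard ⟨fun w hw => reach_trans hre hw, fun hsub => ?_⟩ (Set.toFinite _)
        exact he2.2 ⟨hre, hsub (reach_refl v)⟩
      have h3 : (ε⁻¹) ^ ht (rng e) ≤ (ε⁻¹) ^ ht v * ε := by
        rw [← div_inv_eq_mul, le_div_iff₀ (by positivity), ← pow_succ]
        exact pow_le_pow_right₀ hK1 hlt
      have h4 : 0 ≤ Real.exp (-β * F e) * y (rng e) := mul_nonneg (Real.exp_pos _).le (hy _).le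
      nlinarith [mul_le_mul_of_nonneg_right h3 h4]
  rw [OSum_split (hD v hv), one_mul]
  have e3 := mul_lt_mul_of_pos_left (hε v hv) hp
  linarith

lemma rng_mem_src {src rng : E → V} {v : V} {l : List E} (h : Wk src rng v l v) {e : E}
    (he : e ∈ l) : rng e ∈ l.map src := by
  obtain ⟨s, t, rfl⟩ := List.append_of_mem he
  obtain ⟨c, h1, h2, h3⟩ := wk_append.1 h
  cases t with
  | cons f t => have := h3.1; rw [← this]; simp
  | nil =>
    have h3 : rng e = v := h3
    cases s with
    | nil =>
      have h1 : v = c := h1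
      simp [h3, h1, h2]
    | cons f s =>
      have := h1.1
      rw [h3, ← this]; simp

lemma unique_out [Fintype E] {src rng : E → V} {F : E → ℝ} {β : ℝ} (hβ : β < 0) {v0 : V}
    (hsub : ∀ r, 1 < r → ESub src rng F β (cls src rng v0) r) {μ : List E}
    (hμ : LoopIn src rng (cls src rng v0) μ) (hF : 0 ≤ Fpath F μ) {e f : E} (he : e ∈ μ)
    (hf : src f = src e) (hf' : rng f ∈ cls src rng v0) : f = e := by
  by_contra hne
  obtain ⟨hl, hin⟩ := hμ
  obtain ⟨hμ0, s0, hw⟩ := isLoop_iff.1 hl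
  have heC := hin e he
  obtain ⟨p, s, rfl⟩ := List.append_of_mem he
  obtain ⟨c, h1, h2, h3⟩ := wk_append.1 hw
  have hw1 : Wk src rng (rng e) (s ++ p) (src e) := wk_append.2 ⟨s0, h3, h2 ▸ h1⟩
  have hin1 : InS src rng (cls src rng v0) (s ++ p) := wk_inS_cls hw1 heC.2 heC.1
  obtain ⟨l, hw2⟩ := reach_iff.1 (reach_trans hf'.2 heC.1.1)
  have hin2 := wk_inS_cls hw2 hf' heC.1
  have hFμ : Fpath F (p ++ e :: s) = F e + Fpath F (s ++ p) := by
    simp [Fpath]; ring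
  rw [hFμ] at hF
  have key : ∀ r : ℝ, 1 < r → r ^ l.length + r ^ (s ++ p).length *
      (Real.exp (-β * F f) * Real.exp (-β * Fpath F l)) ≤ r ^ (s ++ p).length * r ^ l.length * r := by
    intro r hr
    have hr0 : 0 < r := by linarith
    obtain ⟨x, hx, h⟩ := hsub r hr
    have a1 := (walk_weight hr0 hx h hw1 hin1).1
    have a2 := (walk_weight hr0 hx h hw2 hin2).1
    have a3 := h (src e) heC.1
    have a4 := OSum_pair (g := fun e => Real.exp (-β * F e) * x (rng e)) (v := src e)
      (fun e => mul_nonneg (Real.exp_pos _).le (hx _).le) e f (Ne.symm hne) rfl heC.2 hf hf'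
    have a5 := a4.trans a3.le
    have a6 : 1 ≤ Real.exp (-β * F e) * Real.exp (-β * Fpath F (s ++ p)) := by
      rw [← Real.exp_add, ← mul_add]
      exact Real.one_le_exp (mul_nonneg (by linarith) hF)
    refine le_of_mul_le_mul_right ?_ (hx (src e))
    set n := (s ++ p).length
    set m := l.length
    have hn : 0 < r ^ n := by positivity
    have hm : 0 < r ^ m := by positivity
    have b1 := mul_le_mul_of_nonneg_left a1 (mul_nonneg hm.le (Real.exp_pos (-β * F e)).le)
    have b2 := mul_le_mul_of_nonneg_left a2 (mul_nonneg hn.le (Real.exp_pos (-β * F f)).le)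
    have b3 := mul_le_mul_of_nonneg_left a5 (mul_nonneg hn.le hm.le)
    have b4 := mul_le_mul_of_nonneg_left a6 (mul_nonneg hm.le (hx (src e)).le)
    linarith
  have hlim : (1 : ℝ) ^ l.length + 1 ^ (s ++ p).length *
      (Real.exp (-β * F f) * Real.exp (-β * Fpath F l)) ≤
        1 ^ (s ++ p).length * 1 ^ l.length * 1 := by
    have c1 : Continuous (fun r : ℝ => r ^ l.length + r ^ (s ++ p).length *
      (Real.exp (-β * F f) * Real.exp (-β * Fpath F l))) := by fun_prop
    have c2 : Continuous (fun r : ℝ => r ^ (s ++ p).length * r ^ l.length * r) := by fun_prop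
    refine le_of_tendsto_of_tendsto (b := nhdsWithin (1 : ℝ) (Set.Ioi 1))
      ((c1.tendsto 1).mono_left nhdsWithin_le_nhds)
      ((c2.tendsto 1).mono_left nhdsWithin_le_nhds) ?_
    filter_upwards [self_mem_nhdsWithin] with r hr
    exact key r hr
  have := mul_pos (Real.exp_pos (-β * F f)) (Real.exp_pos (-β * Fpath F l))
  simp only [one_pow, one_mul] at hlim
  linarith

lemma circ_of_unique {src rng : E → V} {v0 : V} {μ : List E}
    (hμ : LoopIn src rng (cls src rng v0) μ)
    (hu : ∀ e ∈ μ, ∀ f, src f = src e → rng f ∈ cls src rng v0 → f = e) :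
    ∃ l, CircularWitness src rng (cls src rng v0) l := by
  classical
  have hex : ∃ n, ∃ l : List E, l.length = n ∧ LoopIn src rng (cls src rng v0) l ∧
      ∀ e ∈ l, e ∈ μ := ⟨_, μ, rfl, hμ, fun _ h => h⟩
  obtain ⟨l, hlen, hl, hlμ⟩ := Nat.find_spec hex
  have hmin := fun m => Nat.find_min hex (m := m)
  obtain ⟨hl1, hin⟩ := hl
  obtain ⟨hne, s0, hw⟩ := isLoop_iff.1 hl1
  have hall : ∀ (k : List E) (a w : V), Wk src rng a k w → a ∈ l.map src →
      w ∈ cls src rng v0 → w ∈ l.map src := by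
    intro k
    induction k with
    | nil => intro a w h1 h2 _; have h1 : a = w := h1; exact h1 ▸ h2
    | cons f k ih =>
      intro a w h1 h2 h3
      refine ih (rng f) w h1.2 ?_ h3
      obtain ⟨e, he, hea⟩ := List.mem_map.1 h2
      have haC : a ∈ cls src rng v0 := hea ▸ (hin e he).1
      have hfC := wk_inS_cls h1 haC h3 f (by simp)
      have : f = e := hu e (hlμ e he) f (h1.1.trans hea.symm) hfC.2
      rw [this]
      exact rng_mem_src hw he
  have hv : ∀ v ∈ cls src rng v0, v ∈ l.map src := by
    intro v hv
    obtain ⟨e, he⟩ := List.exists_mem_of_ne_nil l hne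
    obtain ⟨k, hk⟩ := reach_iff.1 (reach_trans (hin e he).1.2 hv.1)
    exact hall k _ v hk (List.mem_map.2 ⟨e, he, rfl⟩) hv
  refine ⟨l, ⟨hl1, hin⟩, ?_, hv, ?_⟩
  · by_contra hnd
    obtain ⟨p, q, s, rfl, hq, hs, hc, -⟩ := cut hw hnd
    refine hmin q.length ?_ ⟨q, rfl, ⟨isLoop_iff.2 ⟨hq, hc⟩, fun e he => hin e (by simp [he])⟩,
      fun e he => hlμ e (by simp [he])⟩
    rw [← hlen]
    have := List.length_pos_iff.2 hs
    simp
    omega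
  · intro f hf1 hf2
    obtain ⟨e, he, hea⟩ := List.mem_map.1 (hv _ hf1)
    have : f = e := hu e (hlμ e he) f hea.symm hf2
    exact this ▸ he

/-- For `β < 0` and a non-circular component `C`: `C` is `A(β)`-harmonic iff all loops in
`C̄` have `F < 0`, `ρ(A(β)^C) = 1`, and every component `C' ⊆ C̄ ∖ C` satisfies
`ρ(A(β')^{C'}) = 1` for some `β' > β`. -/
theorem isAharmonic_iff_neg_noncircular {V E : Type*} [Fintype V] [DecidableEq V] [Fintype E]
    (src rng : E → V) (F : E → ℝ)
    (β : ℝ) (hβ : β < 0)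
    (C : Set V) (hC : GIsComponent src rng C) (hnc : ¬ IsCircular src rng C) :
    (specRadOn (Amat src rng F β) C = 1 ∧
      ((GClosure src rng C \ C).Nonempty →
        specRadOn (Amat src rng F β) (GClosure src rng C \ C) < 1)) ↔
    ((∀ μ : List E, LoopIn src rng (GClosure src rng C) μ → Fpath F μ < 0) ∧
      specRadOn (Amat src rng F β) C = 1 ∧
      (∀ C' : Set V, GIsComponent src rng C' → C' ⊆ GClosure src rng C \ C →
        ∃ β' : ℝ, β < β' ∧ specRadOn (Amat src rng F β') C' = 1)) := by
  classical
  obtain ⟨⟨v0, hC0⟩, -⟩ := id hC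
  have hC1 : C = cls src rng v0 := hC0
  have hDcls : ∀ v ∈ GClosure src rng C \ C, cls src rng v ⊆ GClosure src rng C \ C := by
    rintro v ⟨⟨w, hw, hvw⟩, hvC⟩ u hu
    refine ⟨⟨w, hw, reach_trans hu.2 hvw⟩, fun huC => hvC ?_⟩
    rw [hC1] at huC ⊢
    exact ⟨reach_trans huC.1 hu.2, reach_trans hu.1 huC.2⟩
  constructor
  · rintro ⟨h1, h2⟩
    refine ⟨?_, h1, ?_⟩
    · rintro μ ⟨hl, hin⟩
      obtain ⟨hne, s0, hw⟩ := isLoop_iff.1 hl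
      have hcls := wk_inS_cls (v := s0) hw (mem_cls_self _) (mem_cls_self _)
      by_cases hs : s0 ∈ C
      · by_contra hF
        push Not at hF
        refine hnc ⟨hC, ?_⟩
        rw [hC1] at hs h1 ⊢
        rw [cls_eq hs] at hcls
        have hsub : ∀ r, 1 < r → ESub src rng F β (cls src rng v0) r := fun r hr =>
          (specRadOn_lt_iff src rng F β _ r (by linarith)).1 (h1 ▸ hr)
        exact circ_of_unique ⟨hl, hcls⟩ fun e he f hf hf' =>
          unique_out hβ hsub ⟨hl, hcls⟩ hF he hf hf'
      · have hsD : s0 ∈ GClosure src rng C \ C := by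
          refine ⟨?_, hs⟩
          obtain ⟨e, he⟩ := List.exists_mem_of_ne_nil μ hne
          obtain ⟨w, hw', hr⟩ := (hin e he).1
          exact ⟨w, hw', reach_trans (wk_mem hw he).1 hr⟩
        have h3 := (specRadOn_lt_iff src rng F β _ 1 one_pos).1 (h2 ⟨_, hsD⟩)
        have h4 := loop_weight one_pos (ESub_mono (hDcls s0 hsD) h3) ⟨hl, hcls⟩
        rw [one_pow, Real.exp_lt_one_iff] at h4
        nlinarith
    · intro C' hC' hsub
      obtain ⟨-, l, hl⟩ := hC'
      obtain ⟨hne, -⟩ := isLoop_iff.1 hl.1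
      obtain ⟨e, he⟩ := List.exists_mem_of_ne_nil l hne
      have h3 := (specRadOn_lt_iff src rng F β _ 1 one_pos).1 (h2 ⟨_, hsub (hl.2 e he).1⟩)
      have h4 := (specRadOn_lt_iff src rng F β _ 1 one_pos).2 (ESub_mono hsub h3)
      have h5 : 1 ≤ specRadOn (Amat src rng F 0) C' := by
        by_contra h6
        push Not at h6
        have h7 := loop_weight one_pos ((specRadOn_lt_iff src rng F 0 _ 1 one_pos).1 h6) hl
        simp at h7
      obtain ⟨b, hb, hb1⟩ := intermediate_value_Icc hβ.le
        (rho_continuous src rng F C').continuousOn ⟨h4.le, h5⟩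
      refine ⟨b, lt_of_le_of_ne hb.1 ?_, hb1⟩
      rintro rfl
      simp only at hb1
      linarith
  · rintro ⟨h1, h2, h3⟩
    refine ⟨h2, fun _ => ?_⟩
    rw [specRadOn_lt_iff src rng F β _ 1 one_pos]
    refine glue src rng F β _ hDcls ?_
    intro v hv
    by_cases hl : ∃ l, LoopIn src rng (cls src rng v) l
    · obtain ⟨b, hb, hb1⟩ := h3 (cls src rng v) ⟨⟨v, rfl⟩, hl⟩ (hDcls v hv)
      obtain ⟨c, hc, ht⟩ := ESub_transfer src rng F (cls src rng v) (fun l hl => h1 l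
        ⟨hl.1, fun e he => ⟨(hDcls v hv (hl.2 e he).1).1, (hDcls v hv (hl.2 e he).2).1⟩⟩)
      have hpos : 0 < (b - β) * c := mul_pos (by linarith) hc
      have h4 := ht β b (Real.exp ((b - β) * c)) hb
        ((specRadOn_lt_iff src rng F b _ _ (Real.exp_pos _)).1 (by
          rw [hb1]; exact Real.one_lt_exp_iff.2 hpos))
      rwa [← Real.exp_add, neg_add_cancel, Real.exp_zero] at h4
    · refine ⟨fun _ => 1, fun _ => one_pos, fun w hw => ?_⟩
      rw [OSum_eq_zero]
      · norm_num
      · intro e he1 he2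
        apply hl
        obtain ⟨l, hl⟩ := reach_iff.1 (reach_trans he2.2 hw.1)
        have hwk : Wk src rng w (e :: l) w := ⟨he1, hl⟩
        exact ⟨e :: l, isLoop_iff.2 ⟨by simp, w, hwk⟩, wk_inS_cls hwk hw hw⟩
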